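/- Under the adapted pure-frontal setup with focal data, assume κ_t(0) ≠ 0 and r_c(0) ≠ 0 (so f has a 5/2-cuspidal edge at 0 and C_j is an immersion at 0). Then for j = 1,2 the mean curvature of the focal surface C_j at 0, computed with the unit normal e_j = x_j/‖x_j‖ as H^{C_j} = (E^C N^C − 2F^C M^C + G^C L^C)/(2(E^C G^C − (F^C)²)) with E^C = ⟨(C_j)_u,(C_j)_u⟩, F^C = ⟨(C_j)_u,(C_j)_v⟩, G^C = ⟨(C_j)_v,(C_j)_v⟩, L^C = −⟨(C_j)_u,(e_j)_u⟩, M^C = −⟨(C_j)_v,(e_j)_u⟩, N^C = −⟨(C_j)_v,(e_j)_v⟩, satisfies (with all invariants and their u-derivatives evaluated at u = 0): H^{C_j}(0) = −κ_j·(κ_s·(κ_t² + (κ_ν−κ_j)²) + κ_t'·(κ_ν−κ_j) − κ_t·κ_ν')/(2(κ_t² + (κ_ν−κ_j)²)^{3/2}). -/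

import Mathlib

open Filter

noncomputable section

/-- Vectors in ℝ³, modeled as `Fin 3 → ℝ`. -/
abbrev R3 : Type := Fin 3 → ℝ

/-- The Euclidean inner product on ℝ³. -/
def dot3 (a b : R3) : ℝ := a 0 * b 0 + a 1 * b 1 + a 2 * b 2

/-- The Euclidean norm on ℝ³. -/
def norm3 (a : R3) : ℝ := Real.sqrt (dot3 a a)

/-- Partial derivative in the `u`-direction. -/
def pu {E : Type*} [NormedAddCommGroup E] [NormedSpace ℝ E] (F : ℝ × ℝ → E) (p : ℝ × ℝ) : E :=
  fderiv ℝ F p (1, 0)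

/-- Partial derivative in the `v`-direction. -/
def pv {E : Type*} [NormedAddCommGroup E] [NormedSpace ℝ E] (F : ℝ × ℝ → E) (p : ℝ × ℝ) : E :=
  fderiv ℝ F p (0, 1)

/-- The adapted pure-frontal setup: `f` is a frontal with unit normal `ν`,
`f_v = v·h`, `ν_v = v·ν₁`, the frame `{f_u, h, ν}` is linearly independent everywhere
and orthonormal along the `u`-axis. -/
structure AdaptedPureFrontal (f ν h ν₁ : ℝ × ℝ → R3) : Prop where
  smooth_f : ContDiff ℝ (⊤ : ℕ∞) f
  smooth_ν : ContDiff ℝ (⊤ : ℕ∞) ν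
  smooth_h : ContDiff ℝ (⊤ : ℕ∞) h
  smooth_ν₁ : ContDiff ℝ (⊤ : ℕ∞) ν₁
  unit_ν : ∀ p, dot3 (ν p) (ν p) = 1
  orth_fu_ν : ∀ p, dot3 (pu f p) (ν p) = 0
  orth_fv_ν : ∀ p, dot3 (pv f p) (ν p) = 0
  fv_eq : ∀ p : ℝ × ℝ, pv f p = p.2 • h p
  νv_eq : ∀ p : ℝ × ℝ, pv ν p = p.2 • ν₁ p
  indep : ∀ p, LinearIndependent ℝ ![pu f p, h p, ν p]
  adapted_fu : ∀ u : ℝ, dot3 (pu f (u, 0)) (pu f (u, 0)) = 1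
  adapted_h : ∀ u : ℝ, dot3 (h (u, 0)) (h (u, 0)) = 1
  adapted_fu_h : ∀ u : ℝ, dot3 (pu f (u, 0)) (h (u, 0)) = 0
  adapted_h_ν : ∀ u : ℝ, dot3 (h (u, 0)) (ν (u, 0)) = 0

/-- Ẽ = ⟨f_u, f_u⟩. -/
def Et (f : ℝ × ℝ → R3) (p : ℝ × ℝ) : ℝ := dot3 (pu f p) (pu f p)

/-- F̃ = ⟨f_u, h⟩. -/
def Ft (f h : ℝ × ℝ → R3) (p : ℝ × ℝ) : ℝ := dot3 (pu f p) (h p)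

/-- G̃ = ⟨h, h⟩. -/
def Gt (h : ℝ × ℝ → R3) (p : ℝ × ℝ) : ℝ := dot3 (h p) (h p)

/-- L̃ = −⟨f_u, ν_u⟩. -/
def Lt (f ν : ℝ × ℝ → R3) (p : ℝ × ℝ) : ℝ := -dot3 (pu f p) (pu ν p)

/-- M̃ = −⟨h, ν_u⟩. -/
def Mt (h ν : ℝ × ℝ → R3) (p : ℝ × ℝ) : ℝ := -dot3 (h p) (pu ν p)

/-- Ñ₁ = −⟨h, ν₁⟩. -/
def Nt1 (h ν₁ : ℝ × ℝ → R3) (p : ℝ × ℝ) : ℝ := -dot3 (h p) (ν₁ p)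

/-- The Gaussian curvature K = (L̃Ñ₁ − M̃²)/(ẼG̃ − F̃²). -/
def Kg (f ν h ν₁ : ℝ × ℝ → R3) (p : ℝ × ℝ) : ℝ :=
  (Lt f ν p * Nt1 h ν₁ p - Mt h ν p ^ 2) / (Et f p * Gt h p - Ft f h p ^ 2)

/-- The mean curvature H = (ẼÑ₁ − 2F̃M̃ + G̃L̃)/(2(ẼG̃ − F̃²)). -/
def Hm (f ν h ν₁ : ℝ × ℝ → R3) (p : ℝ × ℝ) : ℝ :=
  (Et f p * Nt1 h ν₁ p - 2 * Ft f h p * Mt h ν p + Gt h p * Lt f ν p) /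
    (2 * (Et f p * Gt h p - Ft f h p ^ 2))

/-- The principal curvature κ = H + ε√(H² − K); `ε = 1` gives κ₁ and `ε = -1` gives κ₂. -/
def kap (f ν h ν₁ : ℝ × ℝ → R3) (ε : ℝ) (p : ℝ × ℝ) : ℝ :=
  Hm f ν h ν₁ p + ε * Real.sqrt (Hm f ν h ν₁ p ^ 2 - Kg f ν h ν₁ p)

/-- First component of the principal vector field V = −v(M̃ − κF̃)∂_u + (L̃ − κẼ)∂_v. -/
def V1c (f ν h ν₁ : ℝ × ℝ → R3) (ε : ℝ) (p : ℝ × ℝ) : ℝ :=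
  -(p.2 * (Mt h ν p - kap f ν h ν₁ ε p * Ft f h p))

/-- Second component of the principal vector field V = −v(M̃ − κF̃)∂_u + (L̃ − κẼ)∂_v. -/
def V2c (f ν h ν₁ : ℝ × ℝ → R3) (ε : ℝ) (p : ℝ × ℝ) : ℝ :=
  Lt f ν p - kap f ν h ν₁ ε p * Et f p

/-- Directional derivative of `g` along the principal vector field V. -/
def VD (f ν h ν₁ : ℝ × ℝ → R3) (ε : ℝ) {E : Type*} [NormedAddCommGroup E] [NormedSpace ℝ E]
    (g : ℝ × ℝ → E) (p : ℝ × ℝ) : E :=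
  V1c f ν h ν₁ ε p • pu g p + V2c f ν h ν₁ ε p • pv g p

/-- The radius of principal curvature ρ = 1/κ. -/
def rho (f ν h ν₁ : ℝ × ℝ → R3) (ε : ℝ) (p : ℝ × ℝ) : ℝ := (kap f ν h ν₁ ε p)⁻¹

/-- The focal surface C = f + ρ·ν. -/
def Cf (f ν h ν₁ : ℝ × ℝ → R3) (ε : ℝ) (p : ℝ × ℝ) : R3 :=
  f p + rho f ν h ν₁ ε p • ν p

/-- The normal direction x = −(M̃ − κF̃)·f_u + (L̃ − κẼ)·h of the focal surface. -/
def xj (f ν h ν₁ : ℝ × ℝ → R3) (ε : ℝ) (p : ℝ × ℝ) : R3 :=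
  (-(Mt h ν p - kap f ν h ν₁ ε p * Ft f h p)) • pu f p +
    (Lt f ν p - kap f ν h ν₁ ε p * Et f p) • h p

/-- The unit normal e = x/‖x‖ of the focal surface. -/
def ej (f ν h ν₁ : ℝ × ℝ → R3) (ε : ℝ) (p : ℝ × ℝ) : R3 :=
  (norm3 (xj f ν h ν₁ ε p))⁻¹ • xj f ν h ν₁ ε p

/-- The limiting normal curvature κ_ν(u) = L̃(u,0). -/
def kν (f ν : ℝ × ℝ → R3) (u : ℝ) : ℝ := Lt f ν (u, 0)

/-- The cuspidal torsion κ_t(u) = M̃(u,0). -/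
def kt (h ν : ℝ × ℝ → R3) (u : ℝ) : ℝ := Mt h ν (u, 0)

/-- The bias r_b(u) = 3Ñ₁(u,0). -/
def rb (h ν₁ : ℝ × ℝ → R3) (u : ℝ) : ℝ := 3 * Nt1 h ν₁ (u, 0)

/-- The secondary cuspidal curvature r_c(u) = 24((Ñ₁)_v − 2F̃_vM̃ − G̃_vÑ₁)(u,0). -/
def rc (f ν h ν₁ : ℝ × ℝ → R3) (u : ℝ) : ℝ :=
  24 * (pv (Nt1 h ν₁) (u, 0) - 2 * pv (Ft f h) (u, 0) * Mt h ν (u, 0) -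
    pv (Gt h) (u, 0) * Nt1 h ν₁ (u, 0))

/-- The singular curvature κ_s(u) = ⟨f_uu, h⟩(u,0). -/
def ks (f h : ℝ × ℝ → R3) (u : ℝ) : ℝ := dot3 (pu (pu f) (u, 0)) (h (u, 0))

/-- The rank of the differential of `F` at `p`. -/
def rankAt (F : ℝ × ℝ → R3) (p : ℝ × ℝ) : ℕ :=
  Module.finrank ℝ (LinearMap.range (fderiv ℝ F p).toLinearMap)

/-- E^C = ⟨(C_j)_u, (C_j)_u⟩, first fundamental form of the focal surface. -/
def EC (f ν h ν₁ : ℝ × ℝ → R3) (ε : ℝ) (p : ℝ × ℝ) : ℝ :=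
  dot3 (pu (Cf f ν h ν₁ ε) p) (pu (Cf f ν h ν₁ ε) p)

/-- F^C = ⟨(C_j)_u, (C_j)_v⟩. -/
def FC (f ν h ν₁ : ℝ × ℝ → R3) (ε : ℝ) (p : ℝ × ℝ) : ℝ :=
  dot3 (pu (Cf f ν h ν₁ ε) p) (pv (Cf f ν h ν₁ ε) p)

/-- G^C = ⟨(C_j)_v, (C_j)_v⟩. -/
def GC (f ν h ν₁ : ℝ × ℝ → R3) (ε : ℝ) (p : ℝ × ℝ) : ℝ :=
  dot3 (pv (Cf f ν h ν₁ ε) p) (pv (Cf f ν h ν₁ ε) p)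

/-- L^C = −⟨(C_j)_u, (e_j)_u⟩, second fundamental form of the focal surface. -/
def LC (f ν h ν₁ : ℝ × ℝ → R3) (ε : ℝ) (p : ℝ × ℝ) : ℝ :=
  -dot3 (pu (Cf f ν h ν₁ ε) p) (pu (ej f ν h ν₁ ε) p)

/-- M^C = −⟨(C_j)_v, (e_j)_u⟩. -/
def MC (f ν h ν₁ : ℝ × ℝ → R3) (ε : ℝ) (p : ℝ × ℝ) : ℝ :=
  -dot3 (pv (Cf f ν h ν₁ ε) p) (pu (ej f ν h ν₁ ε) p)

/-- N^C = −⟨(C_j)_v, (e_j)_v⟩. -/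
def NC (f ν h ν₁ : ℝ × ℝ → R3) (ε : ℝ) (p : ℝ × ℝ) : ℝ :=
  -dot3 (pv (Cf f ν h ν₁ ε) p) (pv (ej f ν h ν₁ ε) p)

/-- The Gaussian curvature of the focal surface C_j, computed with unit normal e_j. -/
def KC (f ν h ν₁ : ℝ × ℝ → R3) (ε : ℝ) (p : ℝ × ℝ) : ℝ :=
  (LC f ν h ν₁ ε p * NC f ν h ν₁ ε p - MC f ν h ν₁ ε p ^ 2) /
    (EC f ν h ν₁ ε p * GC f ν h ν₁ ε p - FC f ν h ν₁ ε p ^ 2)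

/-- The mean curvature of the focal surface C_j, computed with unit normal e_j. -/
def HC (f ν h ν₁ : ℝ × ℝ → R3) (ε : ℝ) (p : ℝ × ℝ) : ℝ :=
  (EC f ν h ν₁ ε p * NC f ν h ν₁ ε p - 2 * FC f ν h ν₁ ε p * MC f ν h ν₁ ε p +
      GC f ν h ν₁ ε p * LC f ν h ν₁ ε p) /
    (2 * (EC f ν h ν₁ ε p * GC f ν h ν₁ ε p - FC f ν h ν₁ ε p ^ 2))

/-!
Along the singular curve `v = 0` the frame `f_u, h, ν` is orthonormal, and its `u`-derivatives are
given by Frenet type equations with coefficients `κ_s, κ_ν, κ_t`. As `f_v = ν_v = 0` there, the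
focal surface `C = f + ρ ν` has the partial derivatives `C_u = T + ρ_u ν` and `C_v = ρ_v ν`, where
`T = f_u + ρ ν_u` is orthogonal to `ν`. Since `⟨ν, e⟩ = 0` identically, `⟨ν, e_v⟩ = 0`: the
direction of `ν` is asymptotic, and the mean curvature of `C` reduces to
`-⟨T - ρ_u ν, e_u⟩ / (2 ⟨T, T⟩)`. The vector `T - ρ_u ν` is tangent to `C`, so `e_u` may be replaced
by `x_u / ‖x‖`, and expanding in the frame gives the formula; the terms containing `κ_u` cancel.

That `ρ_v ≠ 0` follows from `2 (κ - H) κ_v = (κ - κ_ν) r_c / 24`, the derivative of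
`det (II - κ I) = 0` across the singular curve.
-/

open Matrix in
theorem sum_dotProduct_smul_of_orthonormal {ι R : Type*} [Fintype ι] [DecidableEq ι] [CommRing R]
    {e : ι → ι → R} (he : ∀ i j, e i ⬝ᵥ e j = if i = j then 1 else 0) (w : ι → R) :
    ∑ i, (e i ⬝ᵥ w) • e i = w := by
  have rows : of e * (of e)ᵀ = 1 := by
    ext i j
    exact (he i j).trans (one_apply ..).symm
  calc ∑ i, (e i ⬝ᵥ w) • e i = (of e *ᵥ w) ᵥ* of e := (vecMul_eq_sum _ _).symm
    _ = ((of e)ᵀ * of e) *ᵥ w := by rw [← mulVec_transpose, mulVec_mulVec]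
    _ = w := by rw [mul_eq_one_comm.mp rows, one_mulVec]

section Dot3

variable (a b c : R3) (r : ℝ)

theorem dot3_eq_dotProduct : dot3 a b = a ⬝ᵥ b :=
  (Matrix.vec3_dotProduct a b).symm

theorem dot3_comm : dot3 a b = dot3 b a := by
  simp only [dot3_eq_dotProduct, dotProduct_comm]

theorem dot3_add_left : dot3 (a + b) c = dot3 a c + dot3 b c := by
  simp only [dot3_eq_dotProduct, add_dotProduct]

theorem dot3_add_right : dot3 a (b + c) = dot3 a b + dot3 a c := by
  simp only [dot3_eq_dotProduct, dotProduct_add]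

theorem dot3_smul_left : dot3 (r • a) b = r * dot3 a b := by
  simp only [dot3_eq_dotProduct, smul_dotProduct, smul_eq_mul]

theorem dot3_smul_right : dot3 a (r • b) = r * dot3 a b := by
  simp only [dot3_eq_dotProduct, dotProduct_smul, smul_eq_mul]

theorem dot3_zero_right : dot3 a 0 = 0 := by
  rw [dot3_eq_dotProduct, dotProduct_zero]

theorem dot3_self_ne_zero_iff : dot3 a a ≠ 0 ↔ a ≠ 0 := by
  rw [dot3_eq_dotProduct, ne_eq, dotProduct_self_eq_zero]

end Dot3

/-- Orthonormality of three vectors of ℝ³ for `dot3`; along the singular curve of an adapted pure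
frontal this is satisfied by the frame `f_u, h, ν`. -/
structure IsOrthonormalFrame (a b c : R3) : Prop where
  self_a : dot3 a a = 1
  self_b : dot3 b b = 1
  self_c : dot3 c c = 1
  ab : dot3 a b = 0
  ac : dot3 a c = 0
  bc : dot3 b c = 0

namespace IsOrthonormalFrame

variable {a b c : R3}

theorem eq_sum_dot3_smul (O : IsOrthonormalFrame a b c) (w : R3) :
    w = dot3 a w • a + dot3 b w • b + dot3 c w • c := by
  have orthonormal : ∀ i j, ![a, b, c] i ⬝ᵥ ![a, b, c] j = if i = j then 1 else 0 := by
    intro i j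
    rw [← dot3_eq_dotProduct]
    fin_cases i <;> fin_cases j <;>
      simp [O.self_a, O.self_b, O.self_c, O.ab, O.ac, O.bc, dot3_comm b a, dot3_comm c a,
        dot3_comm c b]
  simpa [Fin.sum_univ_three, dot3_eq_dotProduct] using
    (sum_dotProduct_smul_of_orthonormal orthonormal w).symm

theorem dot3_linear_combination (O : IsOrthonormalFrame a b c) (x y z x' y' z' : ℝ) :
    dot3 (x • a + y • b + z • c) (x' • a + y' • b + z' • c) = x * x' + y * y' + z * z' := by
  simp only [dot3_add_left, dot3_add_right, dot3_smul_left, dot3_smul_right, dot3_comm b a,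
    dot3_comm c a, dot3_comm c b, O.self_a, O.self_b, O.self_c, O.ab, O.ac, O.bc]
  ring

end IsOrthonormalFrame

/-- The vectors `T + a • n` and `b • n` are the partial derivatives of a surface whose `v`-curves
start in the direction `n`; `eu` and `ev` are those of its unit normal. As `n` is then an asymptotic
direction, only the derivative of the normal along `T - a • n` survives. -/
theorem meanCurvature_eq_of_asymptotic {T n eu ev : R3} {a b : ℝ} (hn : dot3 n n = 1)
    (hTn : dot3 T n = 0) (hev : dot3 n ev = 0) (hb : b ≠ 0) :
    (dot3 (T + a • n) (T + a • n) * -dot3 (b • n) ev -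
        2 * dot3 (T + a • n) (b • n) * -dot3 (b • n) eu +
        dot3 (b • n) (b • n) * -dot3 (T + a • n) eu) /
      (2 * (dot3 (T + a • n) (T + a • n) * dot3 (b • n) (b • n) -
        dot3 (T + a • n) (b • n) ^ 2)) =
    -dot3 (T + (-a) • n) eu / (2 * dot3 T T) := by
  simp only [dot3_add_left, dot3_add_right, dot3_smul_left, dot3_smul_right, dot3_comm n T, hn, hTn,
    hev]
  rw [← mul_div_mul_left _ (2 * dot3 T T) (pow_ne_zero 2 hb)]
  ring

section Calculus

variable {E : Type*} [NormedAddCommGroup E] [NormedSpace ℝ E]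

theorem hasDerivAt_pu {g : ℝ × ℝ → E} {u v : ℝ} (hg : DifferentiableAt ℝ g (u, v)) :
    HasDerivAt (fun t => g (t, v)) (pu g (u, v)) u :=
  hg.hasFDerivAt.comp_hasDerivAt (f := fun t => (t, v)) u
    ((hasDerivAt_id u).prodMk (hasDerivAt_const u v))

theorem hasDerivAt_pv {g : ℝ × ℝ → E} {u v : ℝ} (hg : DifferentiableAt ℝ g (u, v)) :
    HasDerivAt (fun t => g (u, t)) (pv g (u, v)) v :=
  hg.hasFDerivAt.comp_hasDerivAt (f := fun t => (u, t)) v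
    ((hasDerivAt_const v u).prodMk (hasDerivAt_id v))

theorem differentiable_pu {g : ℝ × ℝ → E} (hg : ContDiff ℝ 2 g) : Differentiable ℝ (pu g) :=
  ((hg.fderiv_right (m := 1) le_rfl).differentiable one_ne_zero).clm_apply
    (differentiable_const _)

theorem differentiable_pv {g : ℝ × ℝ → E} (hg : ContDiff ℝ 2 g) : Differentiable ℝ (pv g) :=
  ((hg.fderiv_right (m := 1) le_rfl).differentiable one_ne_zero).clm_apply
    (differentiable_const _)

theorem pv_pu_comm {g : ℝ × ℝ → E} (hg : ContDiff ℝ 2 g) (p : ℝ × ℝ) :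
    pv (pu g) p = pu (pv g) p := by
  have differentiable_fderiv : DifferentiableAt ℝ (fderiv ℝ g) p :=
    (hg.fderiv_right (m := 1) le_rfl).differentiable one_ne_zero p
  have fderiv_apply (d e : ℝ × ℝ) :
      fderiv ℝ (fun q => fderiv ℝ g q d) p e = fderiv ℝ (fderiv ℝ g) p e d := by
    simp [fderiv_clm_apply differentiable_fderiv (differentiableAt_const d)]
  have symmetric : IsSymmSndFDerivAt ℝ g p := hg.contDiffAt.isSymmSndFDerivAt (by simp)
  exact (fderiv_apply _ _).trans ((symmetric _ _).trans (fderiv_apply _ _).symm)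

theorem pv_pu_eq_zero {g : ℝ × ℝ → E} (hg : ContDiff ℝ 2 g) {v : ℝ} (hv : ∀ u, pv g (u, v) = 0)
    (u : ℝ) : pv (pu g) (u, v) = 0 := by
  rw [pv_pu_comm hg]
  refine (hasDerivAt_pu (differentiable_pv hg (u, v))).unique ?_
  simpa only [hv] using hasDerivAt_const u (0 : E)

theorem differentiableAt_dot3 {a b : E → R3} {p : E} (ha : DifferentiableAt ℝ a p)
    (hb : DifferentiableAt ℝ b p) : DifferentiableAt ℝ (fun q => dot3 (a q) (b q)) p := by
  have ha_coord := differentiableAt_pi.1 ha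
  have hb_coord := differentiableAt_pi.1 hb
  exact (((ha_coord 0).mul (hb_coord 0)).add ((ha_coord 1).mul (hb_coord 1))).add
    ((ha_coord 2).mul (hb_coord 2))

theorem hasDerivAt_dot3 {a b : ℝ → R3} {a' b' : R3} {t : ℝ} (ha : HasDerivAt a a' t)
    (hb : HasDerivAt b b' t) :
    HasDerivAt (fun s => dot3 (a s) (b s)) (dot3 a' (b t) + dot3 (a t) b') t := by
  have ha_coord := hasDerivAt_pi.1 ha
  have hb_coord := hasDerivAt_pi.1 hb
  refine ((((ha_coord 0).mul (hb_coord 0)).add ((ha_coord 1).mul (hb_coord 1))).add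
    ((ha_coord 2).mul (hb_coord 2))).congr_deriv ?_
  simp only [dot3]
  ring

theorem dot3_deriv_add_eq_zero {a b : ℝ → R3} {a' b' : R3} {t k : ℝ} (ha : HasDerivAt a a' t)
    (hb : HasDerivAt b b' t) (hab : ∀ s, dot3 (a s) (b s) = k) :
    dot3 a' (b t) + dot3 (a t) b' = 0 := by
  refine (hasDerivAt_dot3 ha hb).unique ?_
  simpa only [hab] using hasDerivAt_const t k

theorem dot3_deriv_self_eq_zero {a : ℝ → R3} {a' : R3} {t k : ℝ} (ha : HasDerivAt a a' t)
    (haa : ∀ s, dot3 (a s) (a s) = k) : dot3 (a t) a' = 0 := by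
  have := dot3_deriv_add_eq_zero ha ha haa
  rw [dot3_comm a'] at this
  linarith

end Calculus

section PrincipalCurvature

variable {f ν h ν₁ : ℝ × ℝ → R3} {ε : ℝ} {p : ℝ × ℝ}

/-- The principal curvatures are the roots of `det (II - κ I) = 0`. -/
theorem kap_det_eq (hε : ε ^ 2 = 1) (hHK : 0 ≤ Hm f ν h ν₁ p ^ 2 - Kg f ν h ν₁ p)
    (hI : Et f p * Gt h p - Ft f h p ^ 2 ≠ 0) :
    (Lt f ν p - kap f ν h ν₁ ε p * Et f p) * (Nt1 h ν₁ p - kap f ν h ν₁ ε p * Gt h p) =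
      (Mt h ν p - kap f ν h ν₁ ε p * Ft f h p) ^ 2 := by
  have hH : Et f p * Nt1 h ν₁ p - 2 * Ft f h p * Mt h ν p + Gt h p * Lt f ν p =
      2 * (Et f p * Gt h p - Ft f h p ^ 2) * Hm f ν h ν₁ p := by
    rw [Hm]; field_simp
  have hK : Lt f ν p * Nt1 h ν₁ p - Mt h ν p ^ 2 =
      (Et f p * Gt h p - Ft f h p ^ 2) * Kg f ν h ν₁ p := by
    rw [Kg]; field_simp
  have quadratic : kap f ν h ν₁ ε p ^ 2 - 2 * Hm f ν h ν₁ p * kap f ν h ν₁ ε p +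
      Kg f ν h ν₁ p = 0 := by
    rw [kap]
    linear_combination ε ^ 2 * Real.sq_sqrt hHK + (Hm f ν h ν₁ p ^ 2 - Kg f ν h ν₁ p) * hε
  linear_combination (Et f p * Gt h p - Ft f h p ^ 2) * quadratic -
    kap f ν h ν₁ ε p * hH + hK

theorem dot3_xj_of_orthogonal {w : R3} (hf : dot3 (pu f p) w = 0) (hh : dot3 (h p) w = 0) :
    dot3 (xj f ν h ν₁ ε p) w = 0 := by
  rw [xj, dot3_add_left, dot3_smul_left, dot3_smul_left, hf, hh, mul_zero, mul_zero, add_zero]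

end PrincipalCurvature

namespace AdaptedPureFrontal

variable {f ν h ν₁ : ℝ × ℝ → R3} {ε u : ℝ}

theorem differentiable_f (H : AdaptedPureFrontal f ν h ν₁) : Differentiable ℝ f :=
  H.smooth_f.differentiable (by simp)

theorem differentiable_ν (H : AdaptedPureFrontal f ν h ν₁) : Differentiable ℝ ν :=
  H.smooth_ν.differentiable (by simp)

theorem differentiable_h (H : AdaptedPureFrontal f ν h ν₁) : Differentiable ℝ h :=
  H.smooth_h.differentiable (by simp)

theorem differentiable_pu_f (H : AdaptedPureFrontal f ν h ν₁) : Differentiable ℝ (pu f) :=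
  differentiable_pu (contDiff_infty.1 H.smooth_f 2)

theorem differentiable_pu_ν (H : AdaptedPureFrontal f ν h ν₁) : Differentiable ℝ (pu ν) :=
  differentiable_pu (contDiff_infty.1 H.smooth_ν 2)

theorem pv_f_eq_zero (H : AdaptedPureFrontal f ν h ν₁) (u : ℝ) : pv f (u, 0) = 0 := by
  simp [H.fv_eq]

theorem pv_ν_eq_zero (H : AdaptedPureFrontal f ν h ν₁) (u : ℝ) : pv ν (u, 0) = 0 := by
  simp [H.νv_eq]

theorem pv_pu_f_eq_zero (H : AdaptedPureFrontal f ν h ν₁) (u : ℝ) : pv (pu f) (u, 0) = 0 :=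
  pv_pu_eq_zero (contDiff_infty.1 H.smooth_f 2) H.pv_f_eq_zero u

theorem pv_pu_ν_eq_zero (H : AdaptedPureFrontal f ν h ν₁) (u : ℝ) : pv (pu ν) (u, 0) = 0 :=
  pv_pu_eq_zero (contDiff_infty.1 H.smooth_ν 2) H.pv_ν_eq_zero u

theorem orth_h_ν (H : AdaptedPureFrontal f ν h ν₁) (p : ℝ × ℝ) : dot3 (h p) (ν p) = 0 := by
  obtain ⟨u, v⟩ := p
  rcases eq_or_ne v 0 with rfl | hv
  · exact H.adapted_h_ν u
  · have := H.orth_fv_ν (u, v)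
    rw [H.fv_eq, dot3_smul_left] at this
    exact (mul_eq_zero.mp this).resolve_left hv

theorem isOrthonormalFrame (H : AdaptedPureFrontal f ν h ν₁) (u : ℝ) :
    IsOrthonormalFrame (pu f (u, 0)) (h (u, 0)) (ν (u, 0)) where
  self_a := H.adapted_fu u
  self_b := H.adapted_h u
  self_c := H.unit_ν _
  ab := H.adapted_fu_h u
  ac := H.orth_fu_ν _
  bc := H.adapted_h_ν u

theorem pu_pu_f (H : AdaptedPureFrontal f ν h ν₁) (u : ℝ) :
    pu (pu f) (u, 0) = ks f h u • h (u, 0) + kν f ν u • ν (u, 0) := by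
  have hfu := hasDerivAt_pu (H.differentiable_pu_f (u, 0))
  have hν := hasDerivAt_pu (H.differentiable_ν (u, 0))
  have coord_f : dot3 (pu f (u, 0)) (pu (pu f) (u, 0)) = 0 :=
    dot3_deriv_self_eq_zero hfu H.adapted_fu
  have coord_h : dot3 (h (u, 0)) (pu (pu f) (u, 0)) = ks f h u := dot3_comm _ _
  have coord_ν : dot3 (ν (u, 0)) (pu (pu f) (u, 0)) = kν f ν u := by
    rw [dot3_comm]
    exact eq_neg_of_add_eq_zero_left (dot3_deriv_add_eq_zero hfu hν fun t => H.orth_fu_ν (t, 0))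
  rw [(H.isOrthonormalFrame u).eq_sum_dot3_smul (pu (pu f) (u, 0)), coord_f, coord_h, coord_ν,
    zero_smul, zero_add]

theorem pu_h (H : AdaptedPureFrontal f ν h ν₁) (u : ℝ) :
    pu h (u, 0) = -ks f h u • pu f (u, 0) + kt h ν u • ν (u, 0) := by
  have hfu := hasDerivAt_pu (H.differentiable_pu_f (u, 0))
  have hh := hasDerivAt_pu (H.differentiable_h (u, 0))
  have hν := hasDerivAt_pu (H.differentiable_ν (u, 0))
  have coord_f : dot3 (pu f (u, 0)) (pu h (u, 0)) = -ks f h u :=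
    eq_neg_of_add_eq_zero_right (dot3_deriv_add_eq_zero hfu hh H.adapted_fu_h)
  have coord_h : dot3 (h (u, 0)) (pu h (u, 0)) = 0 := dot3_deriv_self_eq_zero hh H.adapted_h
  have coord_ν : dot3 (ν (u, 0)) (pu h (u, 0)) = kt h ν u := by
    rw [dot3_comm]
    exact eq_neg_of_add_eq_zero_left (dot3_deriv_add_eq_zero hh hν H.adapted_h_ν)
  rw [(H.isOrthonormalFrame u).eq_sum_dot3_smul (pu h (u, 0)), coord_f, coord_h, coord_ν,
    zero_smul, add_zero]

theorem pu_ν (H : AdaptedPureFrontal f ν h ν₁) (u : ℝ) :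
    pu ν (u, 0) = -kν f ν u • pu f (u, 0) + -kt h ν u • h (u, 0) := by
  have hν := hasDerivAt_pu (H.differentiable_ν (u, 0))
  have coord_f : dot3 (pu f (u, 0)) (pu ν (u, 0)) = -kν f ν u := (neg_neg _).symm
  have coord_h : dot3 (h (u, 0)) (pu ν (u, 0)) = -kt h ν u := (neg_neg _).symm
  have coord_ν : dot3 (ν (u, 0)) (pu ν (u, 0)) = 0 :=
    dot3_deriv_self_eq_zero hν fun t => H.unit_ν (t, 0)
  rw [(H.isOrthonormalFrame u).eq_sum_dot3_smul (pu ν (u, 0)), coord_f, coord_h, coord_ν,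
    zero_smul, add_zero]

theorem differentiable_Et (H : AdaptedPureFrontal f ν h ν₁) : Differentiable ℝ (Et f) := fun p =>
  differentiableAt_dot3 (H.differentiable_pu_f p) (H.differentiable_pu_f p)

theorem differentiable_Ft (H : AdaptedPureFrontal f ν h ν₁) : Differentiable ℝ (Ft f h) := fun p =>
  differentiableAt_dot3 (H.differentiable_pu_f p) (H.differentiable_h p)

theorem differentiable_Gt (H : AdaptedPureFrontal f ν h ν₁) : Differentiable ℝ (Gt h) := fun p =>
  differentiableAt_dot3 (H.differentiable_h p) (H.differentiable_h p)

theorem differentiable_Lt (H : AdaptedPureFrontal f ν h ν₁) : Differentiable ℝ (Lt f ν) := fun p =>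
  (differentiableAt_dot3 (H.differentiable_pu_f p) (H.differentiable_pu_ν p)).neg

theorem differentiable_Mt (H : AdaptedPureFrontal f ν h ν₁) : Differentiable ℝ (Mt h ν) := fun p =>
  (differentiableAt_dot3 (H.differentiable_h p) (H.differentiable_pu_ν p)).neg

theorem differentiable_Nt1 (H : AdaptedPureFrontal f ν h ν₁) :
    Differentiable ℝ (Nt1 h ν₁) := fun p =>
  (differentiableAt_dot3 (H.differentiable_h p)
    (H.smooth_ν₁.differentiable (by simp) p)).neg

theorem Et_eq_one (H : AdaptedPureFrontal f ν h ν₁) (u : ℝ) : Et f (u, 0) = 1 :=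
  H.adapted_fu u

theorem Ft_eq_zero (H : AdaptedPureFrontal f ν h ν₁) (u : ℝ) : Ft f h (u, 0) = 0 :=
  H.adapted_fu_h u

theorem Gt_eq_one (H : AdaptedPureFrontal f ν h ν₁) (u : ℝ) : Gt h (u, 0) = 1 :=
  H.adapted_h u

theorem det_firstFundamentalForm_eq_one (H : AdaptedPureFrontal f ν h ν₁) (u : ℝ) :
    Et f (u, 0) * Gt h (u, 0) - Ft f h (u, 0) ^ 2 = 1 := by
  rw [H.Et_eq_one, H.Ft_eq_zero, H.Gt_eq_one]
  norm_num

theorem differentiableAt_Hm (H : AdaptedPureFrontal f ν h ν₁) (u : ℝ) :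
    DifferentiableAt ℝ (Hm f ν h ν₁) (u, 0) := by
  have hE := H.differentiable_Et (u, 0)
  have hF := H.differentiable_Ft (u, 0)
  have hG := H.differentiable_Gt (u, 0)
  have hL := H.differentiable_Lt (u, 0)
  have hM := H.differentiable_Mt (u, 0)
  have hN := H.differentiable_Nt1 (u, 0)
  unfold Hm
  fun_prop (disch := simp [H.det_firstFundamentalForm_eq_one])

theorem differentiableAt_Kg (H : AdaptedPureFrontal f ν h ν₁) (u : ℝ) :
    DifferentiableAt ℝ (Kg f ν h ν₁) (u, 0) := by
  have hE := H.differentiable_Et (u, 0)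
  have hF := H.differentiable_Ft (u, 0)
  have hG := H.differentiable_Gt (u, 0)
  have hL := H.differentiable_Lt (u, 0)
  have hM := H.differentiable_Mt (u, 0)
  have hN := H.differentiable_Nt1 (u, 0)
  unfold Kg
  fun_prop (disch := simp [H.det_firstFundamentalForm_eq_one])

theorem two_mul_Hm (H : AdaptedPureFrontal f ν h ν₁) (u : ℝ) :
    2 * Hm f ν h ν₁ (u, 0) = kν f ν u + Nt1 h ν₁ (u, 0) := by
  rw [Hm, H.det_firstFundamentalForm_eq_one, H.Et_eq_one, H.Ft_eq_zero, H.Gt_eq_one, kν]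
  ring

theorem pv_Et_eq_zero (H : AdaptedPureFrontal f ν h ν₁) (u : ℝ) : pv (Et f) (u, 0) = 0 := by
  have hfu := hasDerivAt_pv (H.differentiable_pu_f (u, 0))
  rw [H.pv_pu_f_eq_zero] at hfu
  have := (hasDerivAt_pv (H.differentiable_Et (u, 0))).unique (hasDerivAt_dot3 hfu hfu)
  rwa [dot3_comm 0, dot3_zero_right, add_zero] at this

theorem pv_Lt_eq_zero (H : AdaptedPureFrontal f ν h ν₁) (u : ℝ) : pv (Lt f ν) (u, 0) = 0 := by
  have hfu := hasDerivAt_pv (H.differentiable_pu_f (u, 0))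
  have hνu := hasDerivAt_pv (H.differentiable_pu_ν (u, 0))
  rw [H.pv_pu_f_eq_zero] at hfu
  rw [H.pv_pu_ν_eq_zero] at hνu
  have := (hasDerivAt_pv (H.differentiable_Lt (u, 0))).unique (hasDerivAt_dot3 hfu hνu).neg
  rwa [dot3_comm 0, dot3_zero_right, dot3_zero_right, add_zero, neg_zero] at this

theorem pv_Ft (H : AdaptedPureFrontal f ν h ν₁) (u : ℝ) :
    pv (Ft f h) (u, 0) = dot3 (pu f (u, 0)) (pv h (u, 0)) := by
  have hfu := hasDerivAt_pv (H.differentiable_pu_f (u, 0))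
  have hh := hasDerivAt_pv (H.differentiable_h (u, 0))
  rw [H.pv_pu_f_eq_zero] at hfu
  have := (hasDerivAt_pv (H.differentiable_Ft (u, 0))).unique (hasDerivAt_dot3 hfu hh)
  rwa [dot3_comm 0, dot3_zero_right, zero_add] at this

theorem pv_Gt (H : AdaptedPureFrontal f ν h ν₁) (u : ℝ) :
    pv (Gt h) (u, 0) = 2 * dot3 (h (u, 0)) (pv h (u, 0)) := by
  have hh := hasDerivAt_pv (H.differentiable_h (u, 0))
  have := (hasDerivAt_pv (H.differentiable_Gt (u, 0))).unique (hasDerivAt_dot3 hh hh)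
  rwa [dot3_comm (pv h _), ← two_mul] at this

theorem pv_Mt (H : AdaptedPureFrontal f ν h ν₁) (u : ℝ) :
    pv (Mt h ν) (u, 0) = kν f ν u * pv (Ft f h) (u, 0) + kt h ν u * pv (Gt h) (u, 0) / 2 := by
  have hh := hasDerivAt_pv (H.differentiable_h (u, 0))
  have hνu := hasDerivAt_pv (H.differentiable_pu_ν (u, 0))
  rw [H.pv_pu_ν_eq_zero] at hνu
  rw [(hasDerivAt_pv (H.differentiable_Mt (u, 0))).unique (hasDerivAt_dot3 hh hνu).neg,
    H.pv_Ft, H.pv_Gt, H.pu_ν, dot3_comm (pv h _), dot3_zero_right, dot3_add_left, dot3_smul_left,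
    dot3_smul_left]
  ring

theorem differentiableAt_kap (H : AdaptedPureFrontal f ν h ν₁)
    (hHK : 0 < Hm f ν h ν₁ (u, 0) ^ 2 - Kg f ν h ν₁ (u, 0)) :
    DifferentiableAt ℝ (kap f ν h ν₁ ε) (u, 0) :=
  (H.differentiableAt_Hm u).add
    ((((H.differentiableAt_Hm u).pow 2).sub (H.differentiableAt_Kg u)).sqrt hHK.ne' |>.const_mul ε)

theorem kap_det_eq_on_singular_curve (H : AdaptedPureFrontal f ν h ν₁) (hε : ε ^ 2 = 1)
    (hHK : 0 ≤ Hm f ν h ν₁ (u, 0) ^ 2 - Kg f ν h ν₁ (u, 0)) :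
    (kν f ν u - kap f ν h ν₁ ε (u, 0)) * (Nt1 h ν₁ (u, 0) - kap f ν h ν₁ ε (u, 0)) =
      kt h ν u ^ 2 := by
  have hdet := kap_det_eq hε hHK (by simp [H.det_firstFundamentalForm_eq_one])
  rwa [H.Et_eq_one, H.Ft_eq_zero, H.Gt_eq_one, mul_one, mul_zero, sub_zero] at hdet

theorem xj_on_singular_curve (H : AdaptedPureFrontal f ν h ν₁) (u : ℝ) :
    xj f ν h ν₁ ε (u, 0) = -kt h ν u • pu f (u, 0) +
      (kν f ν u - kap f ν h ν₁ ε (u, 0)) • h (u, 0) := by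
  simp [xj, H.Et_eq_one, H.Ft_eq_zero, kt, kν]

theorem kap_ne_kν (H : AdaptedPureFrontal f ν h ν₁) (hε : ε ^ 2 = 1)
    (hHK : 0 ≤ Hm f ν h ν₁ (u, 0) ^ 2 - Kg f ν h ν₁ (u, 0)) (hx : xj f ν h ν₁ ε (u, 0) ≠ 0) :
    kap f ν h ν₁ ε (u, 0) ≠ kν f ν u := by
  intro heq
  have hdet := H.kap_det_eq_on_singular_curve hε hHK
  rw [heq, sub_self, zero_mul, eq_comm, sq_eq_zero_iff] at hdet
  exact hx (by simp [H.xj_on_singular_curve, heq, hdet])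

theorem eventually_kap_det_eq (H : AdaptedPureFrontal f ν h ν₁) (hε : ε ^ 2 = 1)
    (hHK : 0 < Hm f ν h ν₁ (u, 0) ^ 2 - Kg f ν h ν₁ (u, 0)) :
    ∀ᶠ p in nhds (u, 0),
      (Lt f ν p - kap f ν h ν₁ ε p * Et f p) * (Nt1 h ν₁ p - kap f ν h ν₁ ε p * Gt h p) =
        (Mt h ν p - kap f ν h ν₁ ε p * Ft f h p) ^ 2 := by
  have hI : ∀ᶠ p in nhds (u, 0), Et f p * Gt h p - Ft f h p ^ 2 ≠ 0 :=
    (((H.differentiable_Et _).mul (H.differentiable_Gt _)).sub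
      ((H.differentiable_Ft _).pow 2)).continuousAt.eventually_ne
        (by simp [H.det_firstFundamentalForm_eq_one])
  have hHK_near : ∀ᶠ p in nhds (u, 0), 0 < Hm f ν h ν₁ p ^ 2 - Kg f ν h ν₁ p :=
    (((H.differentiableAt_Hm u).pow 2).sub
      (H.differentiableAt_Kg u)).continuousAt.eventually_const_lt hHK
  filter_upwards [hI, hHK_near] with p hI_p hHK_p using kap_det_eq hε hHK_p.le hI_p

theorem kap_sub_Hm_mul_pv_kap (H : AdaptedPureFrontal f ν h ν₁) (hε : ε ^ 2 = 1)
    (hHK : 0 < Hm f ν h ν₁ (u, 0) ^ 2 - Kg f ν h ν₁ (u, 0)) :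
    2 * (kap f ν h ν₁ ε (u, 0) - Hm f ν h ν₁ (u, 0)) * pv (kap f ν h ν₁ ε) (u, 0) =
      (kap f ν h ν₁ ε (u, 0) - kν f ν u) * (rc f ν h ν₁ u / 24) := by
  have hE := hasDerivAt_pv (H.differentiable_Et (u, 0))
  have hF := hasDerivAt_pv (H.differentiable_Ft (u, 0))
  have hG := hasDerivAt_pv (H.differentiable_Gt (u, 0))
  have hL := hasDerivAt_pv (H.differentiable_Lt (u, 0))
  have hM := hasDerivAt_pv (H.differentiable_Mt (u, 0))
  have hN := hasDerivAt_pv (H.differentiable_Nt1 (u, 0))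
  have hκ := hasDerivAt_pv (H.differentiableAt_kap (ε := ε) hHK)
  have hdet_near := (Continuous.prodMk_right u).continuousAt.eventually
    (H.eventually_kap_det_eq hε hHK)
  have hderiv := ((hL.sub (hκ.mul hE)).mul (hN.sub (hκ.mul hG))).unique
    (((hM.sub (hκ.mul hF)).pow 2).congr_of_eventuallyEq hdet_near)
  simp only [Pi.mul_apply, Pi.sub_apply, H.Et_eq_one, H.Ft_eq_zero, H.Gt_eq_one, H.pv_Et_eq_zero,
    H.pv_Lt_eq_zero, H.pv_Mt] at hderiv
  have hdet := H.kap_det_eq_on_singular_curve hε hHK.le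
  have hH := H.two_mul_Hm u
  simp only [rc, kν, kt] at hderiv hdet hH ⊢
  linear_combination hderiv - pv (Gt h) (u, 0) * hdet - pv (kap f ν h ν₁ ε) (u, 0) * hH

theorem pv_kap_ne_zero (H : AdaptedPureFrontal f ν h ν₁) (hε : ε ^ 2 = 1)
    (hHK : 0 < Hm f ν h ν₁ (u, 0) ^ 2 - Kg f ν h ν₁ (u, 0)) (hx : xj f ν h ν₁ ε (u, 0) ≠ 0)
    (hrc : rc f ν h ν₁ u ≠ 0) : pv (kap f ν h ν₁ ε) (u, 0) ≠ 0 := by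
  refine right_ne_zero_of_mul (a := 2 * (kap f ν h ν₁ ε (u, 0) - Hm f ν h ν₁ (u, 0))) ?_
  rw [H.kap_sub_Hm_mul_pv_kap hε hHK]
  exact mul_ne_zero (sub_ne_zero.mpr (H.kap_ne_kν hε hHK.le hx)) (div_ne_zero hrc (by norm_num))

theorem differentiableAt_rho (H : AdaptedPureFrontal f ν h ν₁)
    (hHK : 0 < Hm f ν h ν₁ (u, 0) ^ 2 - Kg f ν h ν₁ (u, 0)) (hκ : kap f ν h ν₁ ε (u, 0) ≠ 0) :
    DifferentiableAt ℝ (rho f ν h ν₁ ε) (u, 0) :=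
  (H.differentiableAt_kap hHK).inv hκ

theorem pu_rho (H : AdaptedPureFrontal f ν h ν₁)
    (hHK : 0 < Hm f ν h ν₁ (u, 0) ^ 2 - Kg f ν h ν₁ (u, 0)) (hκ : kap f ν h ν₁ ε (u, 0) ≠ 0) :
    pu (rho f ν h ν₁ ε) (u, 0) =
      -pu (kap f ν h ν₁ ε) (u, 0) / kap f ν h ν₁ ε (u, 0) ^ 2 :=
  (hasDerivAt_pu (H.differentiableAt_rho hHK hκ)).unique
    ((hasDerivAt_pu (H.differentiableAt_kap hHK)).inv hκ)

theorem pv_rho (H : AdaptedPureFrontal f ν h ν₁)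
    (hHK : 0 < Hm f ν h ν₁ (u, 0) ^ 2 - Kg f ν h ν₁ (u, 0)) (hκ : kap f ν h ν₁ ε (u, 0) ≠ 0) :
    pv (rho f ν h ν₁ ε) (u, 0) =
      -pv (kap f ν h ν₁ ε) (u, 0) / kap f ν h ν₁ ε (u, 0) ^ 2 :=
  (hasDerivAt_pv (H.differentiableAt_rho hHK hκ)).unique
    ((hasDerivAt_pv (H.differentiableAt_kap hHK)).inv hκ)

theorem pu_Cf (H : AdaptedPureFrontal f ν h ν₁)
    (hρ : DifferentiableAt ℝ (rho f ν h ν₁ ε) (u, 0)) :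
    pu (Cf f ν h ν₁ ε) (u, 0) =
      (pu f (u, 0) + rho f ν h ν₁ ε (u, 0) • pu ν (u, 0)) +
        pu (rho f ν h ν₁ ε) (u, 0) • ν (u, 0) := by
  have hf := H.differentiable_f (u, 0)
  have hν := H.differentiable_ν (u, 0)
  rw [add_assoc]
  exact (hasDerivAt_pu (hf.add (hρ.smul hν))).unique
    ((hasDerivAt_pu hf).add ((hasDerivAt_pu hρ).smul (hasDerivAt_pu hν)))

theorem pv_Cf (H : AdaptedPureFrontal f ν h ν₁)
    (hρ : DifferentiableAt ℝ (rho f ν h ν₁ ε) (u, 0)) :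
    pv (Cf f ν h ν₁ ε) (u, 0) = pv (rho f ν h ν₁ ε) (u, 0) • ν (u, 0) := by
  have hf := H.differentiable_f (u, 0)
  have hν := H.differentiable_ν (u, 0)
  have := (hasDerivAt_pv (hf.add (hρ.smul hν))).unique
    ((hasDerivAt_pv hf).add ((hasDerivAt_pv hρ).smul (hasDerivAt_pv hν)))
  rwa [H.pv_f_eq_zero, H.pv_ν_eq_zero, smul_zero, zero_add, zero_add] at this

theorem differentiableAt_xj (H : AdaptedPureFrontal f ν h ν₁)
    (hκ : DifferentiableAt ℝ (kap f ν h ν₁ ε) (u, 0)) :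
    DifferentiableAt ℝ (xj f ν h ν₁ ε) (u, 0) := by
  have hE := H.differentiable_Et (u, 0)
  have hF := H.differentiable_Ft (u, 0)
  have hL := H.differentiable_Lt (u, 0)
  have hM := H.differentiable_Mt (u, 0)
  have hfu := H.differentiable_pu_f (u, 0)
  have hh := H.differentiable_h (u, 0)
  unfold xj
  fun_prop

theorem pu_xj (H : AdaptedPureFrontal f ν h ν₁)
    (hκ : DifferentiableAt ℝ (kap f ν h ν₁ ε) (u, 0)) :
    pu (xj f ν h ν₁ ε) (u, 0) =
      (-deriv (kt h ν) u - ks f h u * (kν f ν u - kap f ν h ν₁ ε (u, 0))) • pu f (u, 0) +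
        (deriv (kν f ν) u - pu (kap f ν h ν₁ ε) (u, 0) - kt h ν u * ks f h u) • h (u, 0) +
        (-(kap f ν h ν₁ ε (u, 0) * kt h ν u)) • ν (u, 0) := by
  have hkt : HasDerivAt (kt h ν) (deriv (kt h ν) u) u :=
    (hasDerivAt_pu (H.differentiable_Mt (u, 0))).differentiableAt.hasDerivAt
  have hkν : HasDerivAt (kν f ν) (deriv (kν f ν) u) u :=
    (hasDerivAt_pu (H.differentiable_Lt (u, 0))).differentiableAt.hasDerivAt
  have hderiv := (hkt.neg.smul (hasDerivAt_pu (H.differentiable_pu_f (u, 0)))).add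
    ((hkν.sub (hasDerivAt_pu hκ)).smul (hasDerivAt_pu (H.differentiable_h (u, 0))))
  have hxj := hasDerivAt_pu (H.differentiableAt_xj hκ)
  simp only [H.xj_on_singular_curve] at hxj
  rw [hxj.unique hderiv, H.pu_pu_f, H.pu_h, Pi.neg_apply, Pi.sub_apply]
  module

theorem dot3_xj_self (H : AdaptedPureFrontal f ν h ν₁) (u : ℝ) :
    dot3 (xj f ν h ν₁ ε (u, 0)) (xj f ν h ν₁ ε (u, 0)) =
      kt h ν u ^ 2 + (kν f ν u - kap f ν h ν₁ ε (u, 0)) ^ 2 := by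
  have := (H.isOrthonormalFrame u).dot3_linear_combination (-kt h ν u)
    (kν f ν u - kap f ν h ν₁ ε (u, 0)) 0 (-kt h ν u) (kν f ν u - kap f ν h ν₁ ε (u, 0)) 0
  rw [zero_smul, add_zero, ← H.xj_on_singular_curve] at this
  rw [this]
  ring

theorem differentiableAt_inv_norm3_xj (H : AdaptedPureFrontal f ν h ν₁)
    (hκ : DifferentiableAt ℝ (kap f ν h ν₁ ε) (u, 0)) (hx : xj f ν h ν₁ ε (u, 0) ≠ 0) :
    DifferentiableAt ℝ (fun p => (norm3 (xj f ν h ν₁ ε p))⁻¹) (u, 0) := by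
  have hxx := (dot3_self_ne_zero_iff _).mpr hx
  have hx_diff := H.differentiableAt_xj hκ
  refine ((differentiableAt_dot3 hx_diff hx_diff).sqrt hxx).inv ?_
  rw [H.dot3_xj_self] at hxx ⊢
  exact (Real.sqrt_pos.mpr (lt_of_le_of_ne' (by positivity) hxx)).ne'

/-- The normalizing factor of `e` does not contribute in directions tangent to the focal surface. -/
theorem dot3_pu_ej_of_orthogonal (H : AdaptedPureFrontal f ν h ν₁)
    (hκ : DifferentiableAt ℝ (kap f ν h ν₁ ε) (u, 0)) (hx : xj f ν h ν₁ ε (u, 0) ≠ 0) {w : R3}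
    (hw : dot3 w (xj f ν h ν₁ ε (u, 0)) = 0) :
    dot3 w (pu (ej f ν h ν₁ ε) (u, 0)) =
      (norm3 (xj f ν h ν₁ ε (u, 0)))⁻¹ * dot3 w (pu (xj f ν h ν₁ ε) (u, 0)) := by
  have hs := H.differentiableAt_inv_norm3_xj hκ hx
  have hxj := H.differentiableAt_xj hκ
  have := (hasDerivAt_pu (hs.smul hxj)).unique ((hasDerivAt_pu hs).smul (hasDerivAt_pu hxj))
  rw [show pu (ej f ν h ν₁ ε) (u, 0) = _ from this, dot3_add_right, dot3_smul_right,
    dot3_smul_right, hw, mul_zero, add_zero]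

theorem dot3_ν_pv_ej (H : AdaptedPureFrontal f ν h ν₁)
    (hκ : DifferentiableAt ℝ (kap f ν h ν₁ ε) (u, 0)) (hx : xj f ν h ν₁ ε (u, 0) ≠ 0) :
    dot3 (ν (u, 0)) (pv (ej f ν h ν₁ ε) (u, 0)) = 0 := by
  have hν := hasDerivAt_pv (H.differentiable_ν (u, 0))
  have hej := hasDerivAt_pv
    ((H.differentiableAt_inv_norm3_xj hκ hx).smul (H.differentiableAt_xj hκ))
  have orthogonal (p : ℝ × ℝ) : dot3 (ν p) (ej f ν h ν₁ ε p) = 0 := by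
    rw [ej, dot3_smul_right, dot3_comm, dot3_xj_of_orthogonal (H.orth_fu_ν p) (H.orth_h_ν p),
      mul_zero]
  have := dot3_deriv_add_eq_zero hν hej fun v => orthogonal (u, v)
  rwa [H.pv_ν_eq_zero, dot3_comm 0, dot3_zero_right, zero_add] at this

theorem pu_f_add_rho_smul_pu_ν (H : AdaptedPureFrontal f ν h ν₁) (u : ℝ) :
    pu f (u, 0) + rho f ν h ν₁ ε (u, 0) • pu ν (u, 0) =
      (1 - rho f ν h ν₁ ε (u, 0) * kν f ν u) • pu f (u, 0) +
        (-(rho f ν h ν₁ ε (u, 0) * kt h ν u)) • h (u, 0) := by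
  rw [H.pu_ν]
  module

theorem HC_eq (H : AdaptedPureFrontal f ν h ν₁)
    (hκ : DifferentiableAt ℝ (kap f ν h ν₁ ε) (u, 0))
    (hρ : DifferentiableAt ℝ (rho f ν h ν₁ ε) (u, 0)) (hx : xj f ν h ν₁ ε (u, 0) ≠ 0)
    (hρv : pv (rho f ν h ν₁ ε) (u, 0) ≠ 0) :
    HC f ν h ν₁ ε (u, 0) =
      -dot3 ((pu f (u, 0) + rho f ν h ν₁ ε (u, 0) • pu ν (u, 0)) +
          (-pu (rho f ν h ν₁ ε) (u, 0)) • ν (u, 0)) (pu (ej f ν h ν₁ ε) (u, 0)) /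
        (2 * dot3 (pu f (u, 0) + rho f ν h ν₁ ε (u, 0) • pu ν (u, 0))
          (pu f (u, 0) + rho f ν h ν₁ ε (u, 0) • pu ν (u, 0))) := by
  have tangent_orth : dot3 (pu f (u, 0) + rho f ν h ν₁ ε (u, 0) • pu ν (u, 0)) (ν (u, 0)) = 0 := by
    rw [H.pu_f_add_rho_smul_pu_ν, dot3_add_left, dot3_smul_left, dot3_smul_left, H.orth_fu_ν,
      H.orth_h_ν, mul_zero, mul_zero, add_zero]
  rw [HC, EC, FC, GC, LC, MC, NC, H.pu_Cf hρ, H.pv_Cf hρ]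
  exact meanCurvature_eq_of_asymptotic (H.unit_ν _) tangent_orth (H.dot3_ν_pv_ej hκ hx) hρv

theorem dot3_pu_f_add_rho_smul_pu_ν_self (H : AdaptedPureFrontal f ν h ν₁)
    (hκ : kap f ν h ν₁ ε (u, 0) ≠ 0) :
    dot3 (pu f (u, 0) + rho f ν h ν₁ ε (u, 0) • pu ν (u, 0))
        (pu f (u, 0) + rho f ν h ν₁ ε (u, 0) • pu ν (u, 0)) =
      (kt h ν u ^ 2 + (kν f ν u - kap f ν h ν₁ ε (u, 0)) ^ 2) / kap f ν h ν₁ ε (u, 0) ^ 2 := by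
  have := (H.isOrthonormalFrame u).dot3_linear_combination (1 - rho f ν h ν₁ ε (u, 0) * kν f ν u)
    (-(rho f ν h ν₁ ε (u, 0) * kt h ν u)) 0 (1 - rho f ν h ν₁ ε (u, 0) * kν f ν u)
    (-(rho f ν h ν₁ ε (u, 0) * kt h ν u)) 0
  rw [zero_smul, add_zero, ← H.pu_f_add_rho_smul_pu_ν] at this
  rw [this, rho]
  field_simp
  ring

theorem dot3_tangent_xj (H : AdaptedPureFrontal f ν h ν₁) (hκ : kap f ν h ν₁ ε (u, 0) ≠ 0)
    (r : ℝ) :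
    dot3 ((pu f (u, 0) + rho f ν h ν₁ ε (u, 0) • pu ν (u, 0)) + r • ν (u, 0))
      (xj f ν h ν₁ ε (u, 0)) = 0 := by
  have := (H.isOrthonormalFrame u).dot3_linear_combination (1 - rho f ν h ν₁ ε (u, 0) * kν f ν u)
    (-(rho f ν h ν₁ ε (u, 0) * kt h ν u)) r (-kt h ν u) (kν f ν u - kap f ν h ν₁ ε (u, 0)) 0
  rw [zero_smul, add_zero, ← H.pu_f_add_rho_smul_pu_ν, ← H.xj_on_singular_curve] at this
  rw [this, rho]
  field_simp
  ring

theorem dot3_tangent_pu_xj (H : AdaptedPureFrontal f ν h ν₁)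
    (hHK : 0 < Hm f ν h ν₁ (u, 0) ^ 2 - Kg f ν h ν₁ (u, 0)) (hκ : kap f ν h ν₁ ε (u, 0) ≠ 0) :
    dot3 ((pu f (u, 0) + rho f ν h ν₁ ε (u, 0) • pu ν (u, 0)) +
        (-pu (rho f ν h ν₁ ε) (u, 0)) • ν (u, 0)) (pu (xj f ν h ν₁ ε) (u, 0)) =
      (ks f h u * (kt h ν u ^ 2 + (kν f ν u - kap f ν h ν₁ ε (u, 0)) ^ 2) +
        deriv (kt h ν) u * (kν f ν u - kap f ν h ν₁ ε (u, 0)) -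
        kt h ν u * deriv (kν f ν) u) / kap f ν h ν₁ ε (u, 0) := by
  rw [H.pu_f_add_rho_smul_pu_ν, H.pu_xj (H.differentiableAt_kap hHK),
    (H.isOrthonormalFrame u).dot3_linear_combination, H.pu_rho hHK hκ, rho]
  field_simp
  ring

end AdaptedPureFrontal

theorem stmt_19_general {f ν h ν₁ : ℝ × ℝ → R3} (H : AdaptedPureFrontal f ν h ν₁) {ε u : ℝ}
    (hε : ε = 1 ∨ ε = -1) (hHK : 0 < Hm f ν h ν₁ (u, 0) ^ 2 - Kg f ν h ν₁ (u, 0))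
    (hκ : kap f ν h ν₁ ε (u, 0) ≠ 0) (hx : xj f ν h ν₁ ε (u, 0) ≠ 0)
    (hrc : rc f ν h ν₁ u ≠ 0) :
    HC f ν h ν₁ ε (u, 0) =
      -(kap f ν h ν₁ ε (u, 0) *
          (ks f h u * (kt h ν u ^ 2 + (kν f ν u - kap f ν h ν₁ ε (u, 0)) ^ 2) +
            deriv (kt h ν) u * (kν f ν u - kap f ν h ν₁ ε (u, 0)) -
            kt h ν u * deriv (kν f ν) u)) /
        (2 * Real.sqrt (kt h ν u ^ 2 + (kν f ν u - kap f ν h ν₁ ε (u, 0)) ^ 2) ^ 3) := by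
  have hκ_diff := H.differentiableAt_kap (ε := ε) hHK
  have immersion : pv (rho f ν h ν₁ ε) (u, 0) ≠ 0 := by
    have hκv := H.pv_kap_ne_zero (sq_eq_one_iff.mpr hε) hHK hx hrc
    rw [H.pv_rho hHK hκ]
    exact div_ne_zero (neg_ne_zero.mpr hκv) (pow_ne_zero 2 hκ)
  have normSq_pos : 0 < kt h ν u ^ 2 + (kν f ν u - kap f ν h ν₁ ε (u, 0)) ^ 2 := by
    have := (dot3_self_ne_zero_iff _).mpr hx
    rw [H.dot3_xj_self] at this
    positivity
  rw [H.HC_eq hκ_diff (H.differentiableAt_rho hHK hκ) hx immersion,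
    H.dot3_pu_ej_of_orthogonal hκ_diff hx (H.dot3_tangent_xj hκ _), H.dot3_tangent_pu_xj hHK hκ,
    H.dot3_pu_f_add_rho_smul_pu_ν_self hκ, norm3, H.dot3_xj_self, pow_succ _ 2,
    Real.sq_sqrt normSq_pos.le]
  have norm_ne := (Real.sqrt_pos.mpr normSq_pos).ne'
  field_simp

/-- at a 5/2-cuspidal edge of f (κ_t(0) ≠ 0, r_c(0) ≠ 0), the mean
curvature of the focal surface C_j at 0 equals
−κ_j(κ_s(κ_t² + (κ_ν−κ_j)²) + κ_t'(κ_ν−κ_j) − κ_tκ_ν')/(2(κ_t² + (κ_ν−κ_j)²)^{3/2}). -/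
theorem stmt_19 (f ν h ν₁ : ℝ × ℝ → R3) (H : AdaptedPureFrontal f ν h ν₁)
    (ε : ℝ) (hε : ε = 1 ∨ ε = -1)
    (hHK : ∀ p : ℝ × ℝ, Hm f ν h ν₁ p ^ 2 - Kg f ν h ν₁ p > 0)
    (hκ : ∀ p : ℝ × ℝ, kap f ν h ν₁ ε p ≠ 0)
    (hx : ∀ᶠ p in nhds (0 : ℝ × ℝ), xj f ν h ν₁ ε p ≠ 0)
    (hkt : kt h ν 0 ≠ 0) (hrc : rc f ν h ν₁ 0 ≠ 0) :
    HC f ν h ν₁ ε 0 =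
      -(kap f ν h ν₁ ε 0 *
          (ks f h 0 * ((kt h ν 0) ^ 2 + (kν f ν 0 - kap f ν h ν₁ ε 0) ^ 2) +
            deriv (kt h ν) 0 * (kν f ν 0 - kap f ν h ν₁ ε 0) -
            kt h ν 0 * deriv (kν f ν) 0)) /
        (2 * Real.sqrt ((kt h ν 0) ^ 2 + (kν f ν 0 - kap f ν h ν₁ ε 0) ^ 2) ^ 3) :=
  stmt_19_general H hε (hHK 0) (hκ 0) hx.self_of_nhds hrc
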